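/- Let $n \ge 1$, let $a, b$ be nonzero $n \times n$ complex matrices, let $p > 1$ and $q > 1$ satisfy $1/p + 1/q = 1$. If $\|a b^*\|_1 = \|a\|_p \, \|b\|_q$, then $|a|$ commutes with $|b|$, i.e. $|a| \cdot |b| = |b| \cdot |a|$. -/

import Mathlib

open Matrix
open scoped ComplexOrder

open scoped MatrixOrder in
/-- `matAbs x` is `|x|`, the unique positive semidefinite square root of `xᴴ * x`. -/
noncomputable def matAbs {n : ℕ} (x : Matrix (Fin n) (Fin n) ℂ) : Matrix (Fin n) (Fin n) ℂ :=
  CFC.sqrt (xᴴ * x)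

/-- `matRpow x r` is the real power `x ^ r` defined via the continuous functional calculus. -/
noncomputable def matRpow {n : ℕ} (x : Matrix (Fin n) (Fin n) ℂ) (r : ℝ) :
    Matrix (Fin n) (Fin n) ℂ :=
  cfc (fun t : ℝ => t ^ r) x

/-- The Schatten `r`-norm `(Tr(|x|^r))^(1/r)`. -/
noncomputable def schatten {n : ℕ} (r : ℝ) (x : Matrix (Fin n) (Fin n) ℂ) : ℝ :=
  (Matrix.trace (matRpow (matAbs x) r)).re ^ (1 / r)

lemma svd_aux {n : ℕ} (W : Matrix (Fin n) (Fin n) ℂ) (α : Fin n → ℝ)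
    (hW : Wᴴ * W = diagonal (fun i => ((α i : ℂ)) * (α i : ℂ))) :
    ∃ U : Matrix (Fin n) (Fin n) ℂ, Uᴴ * U = 1 ∧ W = U * diagonal (fun i => (α i : ℂ)) := by
  classical
  let w : Fin n → EuclideanSpace ℂ (Fin n) := fun j => WithLp.toLp 2 (fun i => W i j)
  have hin : ∀ i j, inner ℂ (w i) (w j) = (Wᴴ * W) i j := by
    intro i j
    simp [w, PiLp.inner_apply, Matrix.mul_apply, mul_comm]
  let v : Fin n → EuclideanSpace ℂ (Fin n) := fun j => ((α j : ℂ)⁻¹) • w j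
  let s : Set (Fin n) := {j | α j ≠ 0}
  have hv : Orthonormal ℂ (s.domRestrict v) := by
    rw [orthonormal_iff_ite]
    rintro ⟨i, hi⟩ ⟨j, hj⟩
    have hi' : (α i : ℂ) ≠ 0 := by exact_mod_cast hi
    simp only [Set.domRestrict_apply, v, inner_smul_left, inner_smul_right, hin, hW,
      Matrix.diagonal_apply, Subtype.mk.injEq]
    by_cases h : i = j
    · subst h
      simp
      field_simp
    · simp [h]
  obtain ⟨g, hg⟩ := hv.exists_orthonormalBasis_extension_of_card_eq (by simp)
  refine ⟨Matrix.of (fun i j => g j i), ?_, ?_⟩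
  · ext i j
    have := orthonormal_iff_ite.1 g.orthonormal i j
    rw [Matrix.one_apply, ← this]
    simp [PiLp.inner_apply, Matrix.mul_apply, mul_comm]
  · ext i j
    rw [Matrix.mul_diagonal]
    by_cases h : α j = 0
    · have h1 := hin j j
      rw [hW] at h1
      simp [h] at h1
      have h2 := congrArg (fun x : EuclideanSpace ℂ (Fin n) => x i) h1
      simpa [w, h] using h2
    · have hj' : (α j : ℂ) ≠ 0 := by exact_mod_cast h
      rw [Matrix.of_apply, hg j h]
      simp [v, w]
      field_simp

open scoped MatrixOrder in
lemma svd_exists {n : ℕ} (a : Matrix (Fin n) (Fin n) ℂ) :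
    ∃ (U V : Matrix (Fin n) (Fin n) ℂ) (α : Fin n → ℝ), Uᴴ * U = 1 ∧ Vᴴ * V = 1 ∧ 
      (∀ i, 0 ≤ α i) ∧
      a = U * diagonal (fun i => (α i : ℂ)) * Vᴴ ∧
      matAbs a = V * diagonal (fun i => (α i : ℂ)) * Vᴴ ∧
      ∀ r, schatten r a = (∑ i, (α i) ^ r) ^ (1 / r) := by
  have hnn : 0 ≤ matAbs a := CFC.sqrt_nonneg _
  have hps : (matAbs a).PosSemidef := Matrix.nonneg_iff_posSemidef.1 hnn
  have hA := hps.isHermitian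
  have hsq : matAbs a * matAbs a = aᴴ * a :=
    CFC.sqrt_mul_sqrt_self _ (Matrix.nonneg_iff_posSemidef.2 (posSemidef_conjTranspose_mul_self a))
  let V : Matrix (Fin n) (Fin n) ℂ := hA.eigenvectorUnitary
  have hV : Vᴴ * V = 1 := Unitary.coe_star_mul_self hA.eigenvectorUnitary
  have hV' : V * Vᴴ = 1 := mul_eq_one_comm.1 hV
  have hsp : matAbs a = V * diagonal (fun i => (hA.eigenvalues i : ℂ)) * Vᴴ := by
    have := hA.spectral_theorem
    rw [Unitary.conjStarAlgAut_apply] at this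
    exact this
  have hVA : Vᴴ * matAbs a * V = diagonal (fun i => (hA.eigenvalues i : ℂ)) := by
    calc Vᴴ * matAbs a * V = Vᴴ * (V * diagonal (fun i => (hA.eigenvalues i : ℂ)) * Vᴴ) * V :=
          congrArg (fun M => Vᴴ * M * V) hsp
      _ = (Vᴴ * V) * diagonal (fun i => (hA.eigenvalues i : ℂ)) * (Vᴴ * V) := by
          simp only [Matrix.mul_assoc]
      _ = _ := by rw [hV]; simp
  obtain ⟨U, hU, hW⟩ := svd_aux (a * V) hA.eigenvalues (by
    rw [← diagonal_mul_diagonal, ← hVA, conjTranspose_mul]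
    calc _ = Vᴴ * (aᴴ * a) * V := by simp only [Matrix.mul_assoc]
      _ = Vᴴ * matAbs a * (V * Vᴴ) * matAbs a * V := by
        rw [← hsq, hV']; simp only [Matrix.mul_assoc, Matrix.one_mul]
      _ = _ := by simp only [Matrix.mul_assoc])
  refine ⟨U, V, hA.eigenvalues, hU, hV, hps.eigenvalues_nonneg, ?_, hsp, ?_⟩
  · rw [← hW, Matrix.mul_assoc, hV', Matrix.mul_one]
  · intro r
    have : Matrix.trace (matRpow (matAbs a) r) = ((∑ i, (hA.eigenvalues i) ^ r : ℝ) : ℂ) := by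
      rw [matRpow, hA.cfc_eq, IsHermitian.cfc, Unitary.conjStarAlgAut_apply, Matrix.trace_mul_cycle,
        Unitary.coe_star_mul_self, Matrix.one_mul]
      simp [Matrix.trace]
    rw [schatten, this, Complex.ofReal_re]

lemma unitary_row {n : ℕ} (S : Matrix (Fin n) (Fin n) ℂ) (hS : Sᴴ * S = 1) (i : Fin n) :
    ∑ j, ‖S i j‖ ^ 2 = 1 := by
  have h : (S * Sᴴ) i i = 1 := by rw [mul_eq_one_comm.1 hS]; simp
  rw [Matrix.mul_apply] at h
  simp only [conjTranspose_apply, Complex.star_def, Complex.mul_conj'] at h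
  exact_mod_cast h

lemma unitary_col {n : ℕ} (S : Matrix (Fin n) (Fin n) ℂ) (hS : Sᴴ * S = 1) (j : Fin n) :
    ∑ i, ‖S i j‖ ^ 2 = 1 := by
  have := unitary_row Sᴴ (by simpa using mul_eq_one_comm.1 hS) j
  simpa using this

lemma core {n : ℕ} (S T : Matrix (Fin n) (Fin n) ℂ) (hS : Sᴴ * S = 1) (hT : Tᴴ * T = 1)
    (α β : Fin n → ℝ) (hα : ∀ i, 0 ≤ α i) (hβ : ∀ i, 0 ≤ β i) (p q : ℝ)
    (hp : 1 < p) (hq : 1 < q) (hpq : 1 / p + 1 / q = 1)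
    (hP : 0 < ∑ i, α i ^ p) (hQ : 0 < ∑ i, β i ^ q)
    (h : (∑ i, ∑ j, (α i : ℂ) * S i j * (β j : ℂ) * T j i).re =
      (∑ i, α i ^ p) ^ (1 / p) * (∑ i, β i ^ q) ^ (1 / q)) (i j : Fin n) (hij : S i j ≠ 0) :
    α i = ((∑ i, α i ^ p) * (β j ^ q / ∑ i, β i ^ q)) ^ (1 / p) := by
  set P := ∑ i, α i ^ p
  set Q := ∑ i, β i ^ q
  have hp0 : 0 < p := by linarith
  have hq0 : 0 < q := by linarith
  let X : Fin n → ℝ := fun i => α i ^ p / P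
  let Y : Fin n → ℝ := fun i => β i ^ q / Q
  have hX : ∀ i, 0 ≤ X i := fun i => div_nonneg (Real.rpow_nonneg (hα i) _) hP.le
  have hY : ∀ i, 0 ≤ Y i := fun i => div_nonneg (Real.rpow_nonneg (hβ i) _) hQ.le
  have hXs : ∑ i, X i = 1 := by rw [← Finset.sum_div]; exact div_self hP.ne'
  have hYs : ∑ i, Y i = 1 := by rw [← Finset.sum_div]; exact div_self hQ.ne'
  have hXa : ∀ i, α i = P ^ (1/p) * X i ^ (1/p) := by
    intro i
    rw [← Real.mul_rpow hP.le (hX i), mul_div_cancel₀ _ hP.ne', ← Real.rpow_mul (hα i),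
      mul_one_div_cancel hp0.ne', Real.rpow_one]
  have hYb : ∀ i, β i = Q ^ (1/q) * Y i ^ (1/q) := by
    intro i
    rw [← Real.mul_rpow hQ.le (hY i), mul_div_cancel₀ _ hQ.ne', ← Real.rpow_mul (hβ i),
      mul_one_div_cancel hq0.ne', Real.rpow_one]
  let d : Fin n → Fin n → ℝ := fun i j => (‖S i j‖ ^ 2 + ‖T j i‖ ^ 2) / 2
  have hd0 : ∀ i j, 0 ≤ d i j := fun i j => by positivity
  have hdr : ∀ i, ∑ j, d i j = 1 := by
    intro i
    rw [← Finset.sum_div, Finset.sum_add_distrib, unitary_row S hS, unitary_col T hT]; norm_num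
  have hdc : ∀ j, ∑ i, d i j = 1 := by
    intro i
    rw [← Finset.sum_div, Finset.sum_add_distrib, unitary_row T hT, unitary_col S hS]; norm_num
  have hamgm : ∀ i j, X i ^ (1/p) * Y j ^ (1/q) ≤ 1/p * X i + 1/q * Y j := fun i j =>
    Real.geom_mean_le_arith_mean2_weighted (by positivity) (by positivity) (hX i) (hY j) hpq
  have hPQ : 0 < P ^ (1/p) * Q ^ (1/q) := by positivity
  have h1 : (∑ i, ∑ j, (α i : ℂ) * S i j * (β j : ℂ) * T j i).re ≤
      P ^ (1/p) * Q ^ (1/q) * ∑ i, ∑ j, d i j * (X i ^ (1/p) * Y j ^ (1/q)) := by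
    rw [Complex.re_sum, Finset.mul_sum]
    refine Finset.sum_le_sum fun i _ => ?_
    rw [Complex.re_sum, Finset.mul_sum]
    refine Finset.sum_le_sum fun j _ => ?_
    calc _ ≤ ‖(α i : ℂ) * S i j * (β j : ℂ) * T j i‖ := Complex.re_le_norm _
      _ = α i * β j * (‖S i j‖ * ‖T j i‖) := by
        simp only [norm_mul, Complex.norm_real, Real.norm_eq_abs, abs_of_nonneg (hα i),
          abs_of_nonneg (hβ j)]; ring
      _ ≤ α i * β j * d i j := by
        refine mul_le_mul_of_nonneg_left ?_ (mul_nonneg (hα i) (hβ j))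
        simp only [d]
        nlinarith [sq_nonneg (‖S i j‖ - ‖T j i‖)]
      _ = _ := by
        rw [hXa i, hYb j]; ring
  rw [h] at h1
  have h2 : 1 ≤ ∑ i, ∑ j, d i j * (X i ^ (1/p) * Y j ^ (1/q)) := by
    by_contra hc
    push Not at hc
    nlinarith
  have h3 : ∑ i, ∑ j, d i j * (1/p * X i + 1/q * Y j) = 1 := by
    simp only [mul_add, Finset.sum_add_distrib]
    have e1 : ∑ i, ∑ j, d i j * (1/p * X i) = 1/p := by
      simp only [← Finset.sum_mul, hdr, one_mul, ← Finset.mul_sum, hXs, mul_one]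
    have e2 : ∑ i, ∑ j, d i j * (1/q * Y j) = 1/q := by
      rw [Finset.sum_comm]
      simp only [← Finset.sum_mul, hdc, one_mul, ← Finset.mul_sum, hYs, mul_one]
    rw [e1, e2, hpq]
  have hnn : ∀ i j, 0 ≤ d i j * (1/p * X i + 1/q * Y j - X i ^ (1/p) * Y j ^ (1/q)) :=
    fun i j => mul_nonneg (hd0 i j) (sub_nonneg.2 (hamgm i j))
  have h4 : ∑ i, ∑ j, d i j * (1/p * X i + 1/q * Y j - X i ^ (1/p) * Y j ^ (1/q)) = 0 := by
    refine le_antisymm ?_ (Finset.sum_nonneg fun i _ => Finset.sum_nonneg fun j _ => hnn i j)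
    simp only [mul_sub, Finset.sum_sub_distrib]
    linarith
  have h5 := (Finset.sum_eq_zero_iff_of_nonneg
    (fun i _ => Finset.sum_nonneg fun j _ => hnn i j)).1 h4 i (Finset.mem_univ _)
  have h6 := (Finset.sum_eq_zero_iff_of_nonneg (fun j _ => hnn i j)).1 h5 j (Finset.mem_univ _)
  have hdp : d i j ≠ 0 := by
    have : 0 < ‖S i j‖ := norm_pos_iff.2 hij
    have : 0 < d i j := by positivity
    exact this.ne'
  have h7 := (mul_eq_zero.1 h6).resolve_left hdp
  have h8 : X i = Y j :=
    (Real.geom_mean_eq_arith_mean2_weighted_iff_of_pos (by positivity) (by positivity) (hX i) (hY j)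
      hpq).1 (by linarith)
  rw [Real.mul_rpow hP.le (hY j), ← h8]
  exact hXa i

lemma sum_pos_of_ne {n : ℕ} (a U V : Matrix (Fin n) (Fin n) ℂ) (α : Fin n → ℝ)
    (hα : ∀ i, 0 ≤ α i) (h : a = U * diagonal (fun i => (α i : ℂ)) * Vᴴ) (ha : a ≠ 0) (p : ℝ) :
    0 < ∑ i, α i ^ p := by
  have : ∃ i, α i ≠ 0 := by
    by_contra hc
    push Not at hc
    apply ha
    rw [h]
    simp [hc]
  obtain ⟨i, hi⟩ := this
  exact Finset.sum_pos' (fun i _ => Real.rpow_nonneg (hα i) _)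
    ⟨i, Finset.mem_univ _, Real.rpow_pos_of_pos (lt_of_le_of_ne (hα i) (Ne.symm hi)) _⟩

theorem holder_equality_abs_commute {n : ℕ} (hn : 1 ≤ n)
    (a b : Matrix (Fin n) (Fin n) ℂ) (ha : a ≠ 0) (hb : b ≠ 0) (p q : ℝ)
    (hp : 1 < p) (hq : 1 < q) (hpq : 1 / p + 1 / q = 1)
    (heq : schatten 1 (a * bᴴ) = schatten p a * schatten q b) :
    matAbs a * matAbs b = matAbs b * matAbs a := by
  obtain ⟨U₁, V₁, α, hU₁, hV₁, hα, ha', hA, hsa⟩ := svd_exists a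
  obtain ⟨U₂, V₂, β, hU₂, hV₂, hβ, hb', hB, hsb⟩ := svd_exists b
  obtain ⟨U₃, V₃, γ, hU₃, hV₃, hγ, hc', hC, hsc⟩ := svd_exists (a * bᴴ)
  have hU₂' := mul_eq_one_comm.1 hU₂
  have hV₁' := mul_eq_one_comm.1 hV₁
  have hV₃' := mul_eq_one_comm.1 hV₃
  have hU₃' := mul_eq_one_comm.1 hU₃
  rw [hsc, hsa, hsb] at heq
  simp only [Real.rpow_one, div_one] at heq
  let S := V₁ᴴ * V₂
  let T := U₂ᴴ * V₃ * U₃ᴴ * U₁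
  have hS : Sᴴ * S = 1 := by
    calc _ = V₂ᴴ * (V₁ * V₁ᴴ) * V₂ := by simp [S, Matrix.mul_assoc]
      _ = 1 := by rw [hV₁', Matrix.mul_one, hV₂]
  have hT : Tᴴ * T = 1 := by
    calc _ = U₁ᴴ * (U₃ * (V₃ᴴ * (U₂ * U₂ᴴ) * V₃) * U₃ᴴ) * U₁ := by simp [T, Matrix.mul_assoc]
      _ = 1 := by rw [hU₂', Matrix.mul_one, hV₃, Matrix.mul_one, hU₃', Matrix.mul_one, hU₁]
  have hdc : diagonal (fun i => (γ i : ℂ)) = U₃ᴴ * (a * bᴴ) * V₃ := by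
    rw [hc']
    calc _ = (U₃ᴴ * U₃) * diagonal (fun i => (γ i : ℂ)) * (V₃ᴴ * V₃) := by rw [hU₃, hV₃]; simp
      _ = _ := by simp only [Matrix.mul_assoc]
  have htr : ((∑ i, γ i : ℝ) : ℂ) = ∑ i, ∑ j, (α i : ℂ) * S i j * (β j : ℂ) * T j i := by
    have e1 : ((∑ i, γ i : ℝ) : ℂ) = Matrix.trace (diagonal (fun i => (γ i : ℂ))) := by
      simp [Matrix.trace]
    have e2 : Matrix.trace (U₃ᴴ * (a * bᴴ) * V₃) = Matrix.trace
        (diagonal (fun i => (α i : ℂ)) * S * diagonal (fun i => (β i : ℂ)) * T) := by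
      have hbH : bᴴ = V₂ * diagonal (fun i => (β i : ℂ)) * U₂ᴴ := by
        conv_lhs => rw [hb']
        simp only [conjTranspose_mul, conjTranspose_conjTranspose, diagonal_conjTranspose,
          Matrix.mul_assoc]
        congr 3
        ext i
        simp
      rw [hbH]
      conv_lhs => rw [ha']
      have := Matrix.trace_mul_comm (U₃ᴴ * U₁) (diagonal (fun i => (α i : ℂ)) * V₁ᴴ * 
        (V₂ * diagonal (fun i => (β i : ℂ)) * U₂ᴴ) * V₃)
      simp only [S, T, Matrix.mul_assoc] at this ⊢
      exact this
    rw [e1, hdc, e2, Matrix.trace]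
    refine Finset.sum_congr rfl fun i _ => ?_
    rw [Matrix.diag_apply, Matrix.mul_apply]
    refine Finset.sum_congr rfl fun j _ => ?_
    rw [Matrix.mul_diagonal, Matrix.diagonal_mul]
  have hcore := core S T hS hT α β hα hβ p q hp hq hpq (sum_pos_of_ne a U₁ V₁ α hα ha' ha p)
    (sum_pos_of_ne b U₂ V₂ β hβ hb' hb q) (by rw [← htr, Complex.ofReal_re, heq])
  obtain ⟨φ, hφ⟩ : ∃ φ : Fin n → ℝ, ∀ i j, S i j ≠ 0 → α i = φ j :=
    ⟨_, fun i j h => hcore i j h⟩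
  have hDS : diagonal (fun i => (α i : ℂ)) * S = S * diagonal (fun i => (φ i : ℂ)) := by
    ext i j
    rw [Matrix.mul_diagonal, Matrix.diagonal_mul]
    by_cases h : S i j = 0
    · simp [h]
    · rw [hφ i j h, mul_comm]
  have hV₂' := mul_eq_one_comm.1 hV₂
  have hA2 : matAbs a = V₂ * diagonal (fun i => (φ i : ℂ)) * V₂ᴴ := by
    calc matAbs a = V₁ * diagonal (fun i => (α i : ℂ)) * V₁ᴴ * (V₂ * V₂ᴴ) := by
          rw [hV₂', Matrix.mul_one, hA]
      _ = V₁ * (diagonal (fun i => (α i : ℂ)) * S) * V₂ᴴ := by simp only [S, Matrix.mul_assoc]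
      _ = (V₁ * V₁ᴴ) * V₂ * diagonal (fun i => (φ i : ℂ)) * V₂ᴴ := by
          rw [hDS]; simp only [S, Matrix.mul_assoc]
      _ = _ := by rw [hV₁', Matrix.one_mul]
  have key : ∀ D E : Matrix (Fin n) (Fin n) ℂ,
      (V₂ * D * V₂ᴴ) * (V₂ * E * V₂ᴴ) = V₂ * (D * E) * V₂ᴴ := by
    intro D E
    calc _ = V₂ * D * (V₂ᴴ * V₂) * E * V₂ᴴ := by simp only [Matrix.mul_assoc]
      _ = _ := by rw [hV₂]; simp only [Matrix.mul_assoc, Matrix.one_mul]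
  rw [hA2, hB, key, key, diagonal_mul_diagonal, diagonal_mul_diagonal]
  congr 3
  ext i
  rw [mul_comm]
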